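/- Let X be a median space of finite rank r, and let A ⊆ X be an approximate median subalgebra, i.e., m(A×A×A) ⊆ N_R(A) for some R ≥ 0. Then the Hausdorff distance between A and the median subalgebra ⟨A⟩ generated by A is finite. -/

import Mathlib

/-- A median algebra: a set with a ternary median operation satisfying the
standard axioms. -/
structure MedianAlgebra (X : Type*) where
  med : X → X → X → X
  absorb : ∀ a b, med a a b = a
  rot : ∀ a b c, med a b c = med b c a
  swap : ∀ a b c, med a b c = med b a c
  assoc : ∀ a x b c, med (med a x b) x c = med a x (med b x c)

/-- A subset `C` is convex for the median operation `med` if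
`med(C × C × X) ⊆ C`. -/
def IsConvexSet {X : Type*} (med : X → X → X → X) (C : Set X) : Prop :=
  ∀ a ∈ C, ∀ b ∈ C, ∀ x : X, med a b x ∈ C

/-- A halfspace: a subset such that both it and its complement are nonempty
and convex. -/
def IsHalfspace {X : Type*} (med : X → X → X → X) (h : Set X) : Prop :=
  h.Nonempty ∧ hᶜ.Nonempty ∧ IsConvexSet med h ∧ IsConvexSet med hᶜ

/-- Two halfspaces (equivalently, the walls they bound) are transverse if all
four pairwise intersections of associated halfspaces are nonempty. -/
def Transverse {X : Type*} (h k : Set X) : Prop :=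
  (h ∩ k).Nonempty ∧ (h ∩ kᶜ).Nonempty ∧ (hᶜ ∩ k).Nonempty ∧ (hᶜ ∩ kᶜ).Nonempty

/-- The median algebra has rank at most `r`: any collection of pairwise
transverse (distinct) halfspaces has cardinality at most `r`. -/
def RankLE {X : Type*} (med : X → X → X → X) (r : ℕ) : Prop :=
  ∀ H : Finset (Set X), (∀ h ∈ H, IsHalfspace med h) →
    (∀ h ∈ H, ∀ k ∈ H, h ≠ k → Transverse h k) → H.card ≤ r

/-- Rank 1: no two halfspaces are transverse. -/
def Rank1 {X : Type*} (M : MedianAlgebra X) : Prop :=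
  ∀ h k : Set X, IsHalfspace M.med h → IsHalfspace M.med k → ¬ Transverse h k

/-- The operator `ℳ(A) = med(A × A × A)`. -/
def MSet {X : Type*} (med : X → X → X → X) (A : Set X) : Set X :=
  {p | ∃ a ∈ A, ∃ b ∈ A, ∃ c ∈ A, med a b c = p}

/-- The median subalgebra generated by `A`: the smallest subset containing `A`
and closed under the median operation. -/
def medSpan {X : Type*} (med : X → X → X → X) (A : Set X) : Set X :=
  ⋂₀ {S : Set X | A ⊆ S ∧ ∀ a ∈ S, ∀ b ∈ S, ∀ c ∈ S, med a b c ∈ S}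

/-- The coordinatewise median operation on a product. -/
def prodMed {X Y : Type*} (m₁ : X → X → X → X) (m₂ : Y → Y → Y → Y) :
    X × Y → X × Y → X × Y → X × Y :=
  fun p q r => (m₁ p.1 q.1 r.1, m₂ p.2 q.2 r.2)

/-- `w` is a median point of `x, y, z` in a metric space. -/
def IsMedianPoint {X : Type*} [MetricSpace X] (x y z w : X) : Prop :=
  dist x y = dist x w + dist w y ∧ dist x z = dist x w + dist w z ∧
    dist y z = dist y w + dist w z

/-- A median-space structure on a metric space: every triple admits a unique
median point. -/
structure MedianSpaceStruct (X : Type*) [MetricSpace X] where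
  m : X → X → X → X
  isMedian : ∀ x y z, IsMedianPoint x y z (m x y z)
  unique : ∀ x y z w, IsMedianPoint x y z w → w = m x y z

/-!
Halfspaces separate the points of a median algebra, so a point `x` of `⟨F⟩`, `F` finite, is
determined by the halfspaces containing it, and among those by the ones whose trace on `F` is
minimal. Choose one halfspace for each minimal trace. Those which miss a given point `a` all
contain `x`, and none contains another, so they are pairwise transverse and there are at most `r`
of them. By a Helly argument, a point of `⟨F⟩` lying in `n` given halfspaces containing `x` can be
found in `ℳⁿ(F)`. Take any `a ∈ F`, then `b` in the chosen halfspaces that `a` misses, then `c` in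
those that `a` or `b` misses. Each chosen halfspace contains two of `a`, `b`, `c`, hence contains
`m(a, b, c)`, so `x = m(a, b, c)`. This gives `⟨A⟩ = ℳ^(2r+1)(A)` for every `A`; since `m` is
1-Lipschitz in each variable, each application of `ℳ` keeps us within bounded distance of `A`.
-/

/-! ### Generated subalgebras -/

section Span

variable {X : Type*} {med : X → X → X → X} {A B : Set X}

theorem monotone_mSet : Monotone (MSet med) := by
  rintro A B hAB _ ⟨a, ha, b, hb, c, hc, rfl⟩
  exact ⟨a, hAB ha, b, hAB hb, c, hAB hc, rfl⟩

theorem subset_medSpan : A ⊆ medSpan med A :=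
  fun _ ha _ hS => hS.1 ha

theorem med_mem_medSpan {a b c : X} (ha : a ∈ medSpan med A) (hb : b ∈ medSpan med A)
    (hc : c ∈ medSpan med A) : med a b c ∈ medSpan med A :=
  fun S hS => hS.2 a (ha S hS) b (hb S hS) c (hc S hS)

theorem medSpan_mono (hAB : A ⊆ B) : medSpan med A ⊆ medSpan med B :=
  fun _ hx S hS => hx S ⟨hAB.trans hS.1, hS.2⟩

@[elab_as_elim]
theorem medSpan_induction {p : (x : X) → x ∈ medSpan med A → Prop}
    (mem : ∀ a (ha : a ∈ A), p a (subset_medSpan ha))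
    (med_mem : ∀ a b c ha hb hc, p a ha → p b hb → p c hc →
      p (med a b c) (med_mem_medSpan ha hb hc))
    {x : X} (hx : x ∈ medSpan med A) : p x hx :=
  (hx {x | ∃ hx, p x hx} ⟨fun a ha => ⟨_, mem a ha⟩,
    fun a ⟨_, ha⟩ b ⟨_, hb⟩ c ⟨_, hc⟩ => ⟨_, med_mem a b c _ _ _ ha hb hc⟩⟩).elim fun _ h => h

theorem nonempty_of_mem_medSpan {x : X} (hx : x ∈ medSpan med A) : A.Nonempty := by
  induction hx using medSpan_induction with
  | mem a ha => exact ⟨a, ha⟩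
  | med_mem _ _ _ _ _ _ iha _ _ => exact iha

theorem iterate_mSet_subset_medSpan (n : ℕ) : (MSet med)^[n] A ⊆ medSpan med A := by
  induction n with
  | zero => exact subset_medSpan
  | succ n ih =>
    rw [Function.iterate_succ_apply']
    rintro _ ⟨a, ha, b, hb, c, hc, rfl⟩
    exact med_mem_medSpan (ih ha) (ih hb) (ih hc)

theorem exists_finite_subset_mem_medSpan {x : X} (hx : x ∈ medSpan med A) :
    ∃ F ⊆ A, F.Finite ∧ x ∈ medSpan med F := by
  induction hx using medSpan_induction with
  | mem a ha =>
    exact ⟨{a}, Set.singleton_subset_iff.2 ha, Set.finite_singleton a, subset_medSpan rfl⟩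
  | med_mem a b c _ _ _ iha ihb ihc =>
    obtain ⟨F, hFA, hF, haF⟩ := iha
    obtain ⟨G, hGA, hG, hbG⟩ := ihb
    obtain ⟨H, hHA, hH, hcH⟩ := ihc
    refine ⟨F ∪ (G ∪ H), Set.union_subset hFA (Set.union_subset hGA hHA),
      hF.union (hG.union hH), med_mem_medSpan ?_ ?_ ?_⟩
    · exact medSpan_mono Set.subset_union_left haF
    · exact medSpan_mono (Set.subset_union_left.trans Set.subset_union_right) hbG
    · exact medSpan_mono (Set.subset_union_right.trans Set.subset_union_right) hcH

end Span

/-! ### Betweenness in a median algebra -/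

namespace MedianAlgebra

variable {X : Type*} (M : MedianAlgebra X)

/-- `M.Between a z b` says that `z` lies in the median interval from `a` to `b`. For fixed `a` it is
the relation `z ≤ b` of the meet-semilattice with least element `a` and meet `M.med a`. -/
def Between (a z b : X) : Prop :=
  M.med a z b = z

theorem swap_right (a b c : X) : M.med a b c = M.med a c b := by
  rw [M.rot a b c, M.swap b c a, ← M.rot a c b]

theorem between_left (a b : X) : M.Between a a b :=
  M.absorb a b

theorem between_right (a b : X) : M.Between a b b := by
  rw [Between, M.rot, M.absorb]

theorem between_med (a b c : X) : M.Between a (M.med a b c) b := by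
  rw [Between, M.swap_right, M.swap, M.swap a b c, ← M.assoc, M.swap_right b a b, M.absorb]

theorem between_med₁₃ (a b c : X) : M.Between a (M.med a b c) c := by
  rw [M.swap_right]
  exact M.between_med a c b

theorem between_med₂₃ (a b c : X) : M.Between b (M.med a b c) c := by
  rw [M.rot]
  exact M.between_med b c a

variable {M} {a b c p t u v w x y z : X}

namespace Between

theorem symm (h : M.Between a z b) : M.Between b z a := by
  rwa [Between, M.rot, M.swap]

theorem eq_of_self (h : M.Between a z a) : z = a := by
  rw [← h, M.swap_right, M.absorb]

theorem trans_left (hz : M.Between a z b) (ht : M.Between a t z) : M.Between a t b := by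
  rw [Between] at hz ht ⊢
  calc M.med a t b = M.med (M.med t a z) a b := by rw [M.swap t, ht, M.swap]
    _ = M.med t a (M.med a z b) := by rw [M.assoc, M.swap z]
    _ = t := by rw [hz, M.swap, ht]

theorem trans_left_right (hz : M.Between a z b) (ht : M.Between a t z) : M.Between t z b := by
  rw [Between] at hz ht ⊢
  calc M.med t z b = M.med (M.med t z a) z b := by rw [← M.rot a t z, ht]
    _ = M.med t z (M.med a z b) := M.assoc t z a b
    _ = z := by rw [hz, M.rot, M.absorb]

theorem med_right (ha : M.Between x w a) (hb : M.Between x w b) :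
    M.Between x w (M.med x a b) := by
  rw [Between] at ha hb ⊢
  calc M.med x w (M.med x a b) = M.med (M.med w x a) x b := by rw [M.assoc, M.swap x w, M.swap x a]
    _ = w := by rw [M.swap w, ha, M.swap, hb]

theorem eq_med (hab : M.Between a w b) (hac : M.Between a w c) (hbc : M.Between b w c) :
    w = M.med a b c := by
  have ha : M.Between a w (M.med a b c) := hab.med_right hac
  have hb : M.Between b w (M.med a b c) := by
    rw [M.swap]
    exact hab.symm.med_right hbc
  have hmed : M.med (M.med a b c) a b = M.med a b c := by
    rw [M.swap]
    exact M.between_med a b c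
  exact (hmed ▸ ha.symm.med_right hb.symm).eq_of_self

theorem med_of_between (ht : M.Between a t b) (z : X) : M.Between z (M.med z a b) t := by
  -- The points `a`, `s₁`, `t`, `s₂`, `b` lie in this order, with `n` between `s₁` and `s₂`.
  set s₁ := M.med t a z
  set s₂ := M.med t b z
  set n := M.med s₁ s₂ z
  have hs₁ : M.Between a s₁ t := (M.between_med t a z).symm
  have hs₂ : M.Between s₁ s₂ b :=
    ((ht.trans_left_right hs₁).symm.trans_left (M.between_med t b z).symm).symm
  have hn : M.Between a n b :=
    ((ht.trans_left hs₁).symm.trans_left (hs₂.trans_left (M.between_med s₁ s₂ z)).symm).symm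
  have hzs₁ : M.Between z n s₁ := (M.between_med₁₃ s₁ s₂ z).symm
  have hzs₂ : M.Between z n s₂ := (M.between_med₂₃ s₁ s₂ z).symm
  have hza : M.Between z n a := (M.between_med₂₃ t a z).symm.trans_left hzs₁
  have hzb : M.Between z n b := (M.between_med₂₃ t b z).symm.trans_left hzs₂
  rw [← hza.eq_med hzb hn]
  exact (M.between_med₁₃ t a z).symm.trans_left hzs₁

theorem of_between_right (hu : M.Between p y u) (hv : M.Between p y v) (hw : M.Between u w v) :
    M.Between p y w :=
  (hw.med_of_between p).trans_left (hu.med_right hv)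

end Between

end MedianAlgebra

/-! ### Convex sets and separation -/

namespace IsConvexSet

variable {X : Type*} {M : MedianAlgebra X} {C F h k : Set X} {a b c x y z : X}

theorem mem_of_between (hC : IsConvexSet M.med C) (ha : a ∈ C) (hb : b ∈ C)
    (hz : M.Between a z b) : z ∈ C := by
  rw [← hz, M.swap_right]
  exact hC a ha b hb z

theorem of_between (hC : ∀ a ∈ C, ∀ b ∈ C, ∀ z, M.Between a z b → z ∈ C) :
    IsConvexSet M.med C :=
  fun a ha b hb x => hC a ha b hb _ (M.between_med a b x)

theorem singleton (M : MedianAlgebra X) (x : X) : IsConvexSet M.med {x} := by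
  rintro _ rfl _ rfl z
  exact M.absorb _ z

theorem sUnion_of_isChain {𝓒 : Set (Set X)} (h𝓒 : ∀ C ∈ 𝓒, IsConvexSet M.med C)
    (hchain : IsChain (· ⊆ ·) 𝓒) : IsConvexSet M.med (⋃₀ 𝓒) := by
  rintro a ⟨s, hs, has⟩ b ⟨t, ht, hbt⟩ z
  rcases hchain.total hs ht with hst | hts
  · exact ⟨t, ht, h𝓒 t ht a (hst has) b hbt z⟩
  · exact ⟨s, hs, h𝓒 s hs a has b (hts hbt) z⟩

theorem join (hC : IsConvexSet M.med C) (u : X) :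
    IsConvexSet M.med {z | ∃ c ∈ C, M.Between u z c} := by
  refine of_between ?_
  rintro a ⟨c, hc, ha⟩ b ⟨c', hc', hb⟩ z hz
  refine ⟨M.med c c' z, hC c hc c' hc' z, ?_⟩
  set d := M.med c c' z
  set n := M.med z u d
  have hnu : M.Between z n u := M.between_med z u d
  have hnd : M.Between z n d := M.between_med₁₃ z u d
  have hnc : M.Between z n c := (M.between_med₁₃ c c' z).symm.trans_left hnd
  have hnc' : M.Between z n c' := (M.between_med₂₃ c c' z).symm.trans_left hnd
  have hna : M.Between z n a := hnu.of_between_right hnc ha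
  have hnb : M.Between z n b := hnu.of_between_right hnc' hb
  have hnz : n = z := (hna.of_between_right hnb hz).eq_of_self
  rw [← hnz]
  exact M.between_med₂₃ z u d

theorem compl_of_maximal (hC : Maximal (fun D => IsConvexSet M.med D ∧ y ∉ D) C)
    (hne : C.Nonempty) : IsConvexSet M.med Cᶜ := by
  obtain ⟨hconv, hy⟩ := hC.prop
  have y_mem_join : ∀ u ∉ C, ∃ c ∈ C, M.Between u y c := by
    intro u hu
    by_contra hyu
    obtain ⟨x, hx⟩ := hne
    have hjoin : C ⊆ {z | ∃ c ∈ C, M.Between u z c} := fun c hc => ⟨c, hc, M.between_right u c⟩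
    exact hu (hC.le_of_ge ⟨hconv.join u, hyu⟩ hjoin ⟨x, hx, M.between_left u x⟩)
  refine of_between fun u hu v hv z huzv hz => hy ?_
  obtain ⟨c, hc, hcu⟩ := y_mem_join u hu
  obtain ⟨c', hc', hcv⟩ := y_mem_join v hv
  set p := M.med c c' y
  have hp : p ∈ C := hconv c hc c' hc' y
  have hpu : M.Between p y u := hcu.symm.trans_left_right (M.between_med₁₃ c c' y)
  have hpv : M.Between p y v := hcv.symm.trans_left_right (M.between_med₂₃ c c' y)
  exact hconv.mem_of_between hp hz (hpu.of_between_right hpv huzv)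

theorem exists_isHalfspace (hC : IsConvexSet M.med C) (hne : C.Nonempty) (hy : y ∉ C) :
    ∃ h, IsHalfspace M.med h ∧ C ⊆ h ∧ y ∉ h := by
  obtain ⟨h, hCh, hmax⟩ := zorn_subset_nonempty {D | IsConvexSet M.med D ∧ y ∉ D}
    (fun 𝓒 h𝓒 hchain _ => ⟨⋃₀ 𝓒,
      ⟨sUnion_of_isChain (fun D hD => (h𝓒 hD).1) hchain, fun ⟨D, hD, hyD⟩ => (h𝓒 hD).2 hyD⟩,
      fun _ => Set.subset_sUnion_of_mem⟩) C ⟨hC, hy⟩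
  have hhne : h.Nonempty := hne.mono hCh
  exact ⟨h, ⟨hhne, ⟨y, hmax.prop.2⟩, hmax.prop.1, compl_of_maximal hmax hhne⟩, hCh, hmax.prop.2⟩

/-! ### Halfspaces and generated subalgebras -/

theorem med_mem (hC : IsConvexSet M.med C)
    (habc : (a ∈ C ∧ b ∈ C) ∨ (a ∈ C ∧ c ∈ C) ∨ (b ∈ C ∧ c ∈ C)) : M.med a b c ∈ C := by
  rcases habc with ⟨ha, hb⟩ | ⟨ha, hc⟩ | ⟨hb, hc⟩
  · exact hC a ha b hb c
  · exact M.swap_right a b c ▸ hC a ha c hc b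
  · exact M.rot a b c ▸ hC b hb c hc a

theorem majority_of_med_mem (hC : IsConvexSet M.med Cᶜ) (habc : M.med a b c ∈ C) :
    (a ∈ C ∧ b ∈ C) ∨ (a ∈ C ∧ c ∈ C) ∨ (b ∈ C ∧ c ∈ C) := by
  by_contra hmaj
  refine hC.med_mem ?_ habc
  simp only [Set.mem_compl_iff]
  tauto

theorem inter_inter_nonempty_of_mem_medSpan (hh : IsConvexSet M.med hᶜ) (hk : IsConvexSet M.med kᶜ)
    (hx : x ∈ medSpan M.med F) (hxh : x ∈ h) (hxk : x ∈ k) : (h ∩ k ∩ F).Nonempty := by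
  induction hx using medSpan_induction with
  | mem a ha => exact ⟨a, ⟨hxh, hxk⟩, ha⟩
  | med_mem a b c _ _ _ iha ihb ihc =>
    have hmajh := hh.majority_of_med_mem hxh
    have hmajk := hk.majority_of_med_mem hxk
    have hcommon : (a ∈ h ∧ a ∈ k) ∨ (b ∈ h ∧ b ∈ k) ∨ (c ∈ h ∧ c ∈ k) := by tauto
    rcases hcommon with ha | hb | hc
    · exact iha ha.1 ha.2
    · exact ihb hb.1 hb.2
    · exact ihc hc.1 hc.2

theorem mem_of_inter_subset_of_mem_medSpan (hh : IsConvexSet M.med hᶜ) (hk : IsConvexSet M.med k)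
    (hhk : h ∩ F ⊆ k) (hy : y ∈ medSpan M.med F) (hyh : y ∈ h) : y ∈ k := by
  induction hy using medSpan_induction with
  | mem a ha => exact hhk ⟨hyh, ha⟩
  | med_mem a b c _ _ _ iha ihb ihc =>
    refine hk.med_mem ?_
    have hmaj := hh.majority_of_med_mem hyh
    tauto

end IsConvexSet

theorem exists_forall_mem_of_card_le_two {α : Type*} {F : Set α} (hF : F.Nonempty)
    {T : Finset (Set α)} (hT : T.card ≤ 2) (hinter : ∀ h ∈ T, ∀ k ∈ T, (h ∩ k ∩ F).Nonempty) :
    ∃ c ∈ F, ∀ h ∈ T, c ∈ h := by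
  rcases T.eq_empty_or_nonempty with rfl | ⟨h, hh⟩
  · exact hF.imp fun c hc => ⟨hc, by simp⟩
  · obtain ⟨k, hk, hTk⟩ : ∃ k ∈ T, ∀ l ∈ T, l = h ∨ l = k := by
      by_contra! hcon
      obtain ⟨l, hl, hlh, -⟩ := hcon h hh
      obtain ⟨m, hm, hmh, hml⟩ := hcon l hl
      exact hT.not_gt (Finset.two_lt_card.2 ⟨h, hh, l, hl, m, hm, hlh.symm, hmh.symm, hml.symm⟩)
    obtain ⟨c, ⟨hch, hck⟩, hcF⟩ := hinter h hh k hk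
    exact ⟨c, hcF, fun l hl => by rcases hTk l hl with rfl | rfl <;> assumption⟩

namespace MedianAlgebra

variable {X : Type*} (M : MedianAlgebra X) {F : Set X} {x : X}

theorem subset_mSet (A : Set X) : A ⊆ MSet M.med A :=
  fun a ha => ⟨a, ha, a, ha, a, ha, M.absorb a a⟩

theorem iterate_mSet_subset {m n : ℕ} (hmn : m ≤ n) (A : Set X) :
    (MSet M.med)^[m] A ⊆ (MSet M.med)^[n] A :=
  Function.monotone_iterate_of_id_le M.subset_mSet hmn A

variable {M}

theorem exists_mem_iterate_mSet_of_pairwise_inter (hF : F.Nonempty) (T : Finset (Set X))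
    (hconv : ∀ h ∈ T, IsConvexSet M.med h) (hinter : ∀ h ∈ T, ∀ k ∈ T, (h ∩ k ∩ F).Nonempty) :
    ∃ c ∈ (MSet M.med)^[T.card] F, ∀ h ∈ T, c ∈ h := by
  classical
  induction T using Finset.strongInduction with
  | H T ih =>
    rcases Nat.lt_or_ge 2 T.card with hT | hT
    · obtain ⟨s, hs, t, ht, u, hu, hst, hsu, htu⟩ := Finset.two_lt_card.1 hT
      have avoid_one : ∀ s ∈ T, ∃ c ∈ (MSet M.med)^[T.card - 1] F, ∀ h ∈ T, h ≠ s → c ∈ h := by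
        intro s hs
        obtain ⟨c, hc, hcT⟩ := ih (T.erase s) (Finset.erase_ssubset hs)
          (fun h hh => hconv h (Finset.mem_of_mem_erase hh))
          (fun h hh k hk => hinter h (Finset.mem_of_mem_erase hh) k (Finset.mem_of_mem_erase hk))
        rw [Finset.card_erase_of_mem hs] at hc
        exact ⟨c, hc, fun h hh hne => hcT h (Finset.mem_erase.2 ⟨hne, hh⟩)⟩
      obtain ⟨a, ha, haT⟩ := avoid_one s hs
      obtain ⟨b, hb, hbT⟩ := avoid_one t ht
      obtain ⟨c, hc, hcT⟩ := avoid_one u hu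
      refine ⟨M.med a b c, ?_, fun h hh => (hconv h hh).med_mem ?_⟩
      · rw [← Nat.sub_add_cancel (Nat.one_le_of_lt hT), Function.iterate_succ_apply']
        exact ⟨a, ha, b, hb, c, hc, rfl⟩
      · have hah := haT h hh
        have hbh := hbT h hh
        have hch := hcT h hh
        grind
    · obtain ⟨c, hc, hcT⟩ := exists_forall_mem_of_card_le_two hF hT hinter
      exact ⟨c, M.iterate_mSet_subset (Nat.zero_le _) F hc, hcT⟩

theorem exists_mem_iterate_mSet_of_isHalfspace (hx : x ∈ medSpan M.med F) (T : Finset (Set X))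
    (hT : ∀ h ∈ T, IsHalfspace M.med h ∧ x ∈ h) :
    ∃ c ∈ (MSet M.med)^[T.card] F, ∀ h ∈ T, c ∈ h := by
  refine exists_mem_iterate_mSet_of_pairwise_inter (nonempty_of_mem_medSpan hx) T
    (fun h hh => (hT h hh).1.2.2.1) ?_
  intro h hh k hk
  exact IsConvexSet.inter_inter_nonempty_of_mem_medSpan (hT h hh).1.2.2.2 (hT k hk).1.2.2.2 hx
    (hT h hh).2 (hT k hk).2

end MedianAlgebra

/-! ### Bounded generation in finite rank -/

theorem exists_finite_isAntichain_inter_subset {α : Type*} {F : Set α} (hF : F.Finite)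
    (𝓗 : Set (Set α)) :
    ∃ 𝓡 ⊆ 𝓗, 𝓡.Finite ∧ IsAntichain (· ⊆ ·) 𝓡 ∧ ∀ g ∈ 𝓗, ∃ h ∈ 𝓡, h ∩ F ⊆ g := by
  let trace : Set α → Set α := (· ∩ F)
  have htrace : (trace '' 𝓗).Finite :=
    hF.finite_subsets.subset (Set.image_subset_iff.2 fun _ _ => Set.inter_subset_right)
  obtain ⟨𝓡, h𝓡, hbij⟩ :=
    Set.exists_subset_bijOn {h ∈ 𝓗 | Minimal (· ∈ trace '' 𝓗) (trace h)} trace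
  refine ⟨𝓡, fun h hh => (h𝓡 hh).1, ?_, ?_, ?_⟩
  · refine Set.Finite.of_finite_image (htrace.subset ?_) hbij.injOn
    exact Set.image_mono fun h hh => (h𝓡 hh).1
  · intro h hh k hk hne hhk
    have hle : trace h ⊆ trace k := Set.inter_subset_inter_left F hhk
    exact hne (hbij.injOn hh hk (hle.antisymm ((h𝓡 hk).2.2 (Set.mem_image_of_mem _ (h𝓡 hh).1) hle)))
  · intro g hg
    obtain ⟨_, hle, hmin⟩ := htrace.exists_le_minimal (Set.mem_image_of_mem trace hg)
    obtain ⟨k, hk, rfl⟩ := hmin.prop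
    obtain ⟨h, hh, hhk⟩ := hbij.surjOn ⟨k, ⟨hk, hmin⟩, rfl⟩
    exact ⟨h, hh, hhk.trans_le (hle.trans Set.inter_subset_left)⟩

namespace RankLE

variable {X : Type*} {r : ℕ} {x : X}

theorem card_le_of_isAntichain {med : X → X → X → X} (hr : RankLE med r) {y : X}
    {T : Finset (Set X)} (hT : ∀ h ∈ T, IsHalfspace med h ∧ x ∈ h ∧ y ∉ h)
    (hanti : IsAntichain (· ⊆ ·) (T : Set (Set X))) : T.card ≤ r := by
  refine hr T (fun h hh => (hT h hh).1) fun h hh k hk hne => ?_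
  obtain ⟨-, hxh, hyh⟩ := hT h hh
  obtain ⟨-, hxk, hyk⟩ := hT k hk
  obtain ⟨z, hzh, hzk⟩ := Set.not_subset.1 (hanti hh hk hne)
  obtain ⟨w, hwk, hwh⟩ := Set.not_subset.1 (hanti hk hh hne.symm)
  exact ⟨⟨x, hxh, hxk⟩, ⟨z, hzh, hzk⟩, ⟨w, hwh, hwk⟩, ⟨y, hyh, hyk⟩⟩

variable {M : MedianAlgebra X} {F : Set X}

theorem exists_mem_iterate_mSet_forall_mem (hr : RankLE M.med r) (hx : x ∈ medSpan M.med F)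
    (𝓡 : Finset (Set X)) (h𝓡 : ∀ h ∈ 𝓡, IsHalfspace M.med h ∧ x ∈ h)
    (hanti : IsAntichain (· ⊆ ·) (𝓡 : Set (Set X))) :
    ∃ y ∈ (MSet M.med)^[2 * r + 1] F, ∀ h ∈ 𝓡, y ∈ h := by
  classical
  let missing (y : X) : Finset (Set X) := {h ∈ 𝓡 | y ∉ h}
  have card_missing_le (y : X) : (missing y).card ≤ r := by
    refine hr.card_le_of_isAntichain (x := x) (y := y) (fun h hh => ?_)
      (hanti.subset (Finset.filter_subset _ _))
    obtain ⟨hh, hyh⟩ := Finset.mem_filter.1 hh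
    exact ⟨(h𝓡 h hh).1, (h𝓡 h hh).2, hyh⟩
  have exists_mem_of_card_le (T : Finset (Set X)) (hT𝓡 : T ⊆ 𝓡) (hT : T.card ≤ 2 * r) :
      ∃ c ∈ (MSet M.med)^[2 * r] F, ∀ h ∈ T, c ∈ h := by
    obtain ⟨c, hc, hcT⟩ :=
      MedianAlgebra.exists_mem_iterate_mSet_of_isHalfspace hx T fun h hh => h𝓡 h (hT𝓡 hh)
    exact ⟨c, M.iterate_mSet_subset hT F hc, hcT⟩
  have missing_subset (y : X) : missing y ⊆ 𝓡 := Finset.filter_subset _ _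
  obtain ⟨a, ha, -⟩ := exists_mem_of_card_le ∅ (Finset.empty_subset _) (Nat.zero_le _)
  obtain ⟨b, hb, hba⟩ := exists_mem_of_card_le (missing a) (missing_subset a)
    ((card_missing_le a).trans (Nat.le_mul_of_pos_left r two_pos))
  obtain ⟨c, hc, hcab⟩ := exists_mem_of_card_le (missing a ∪ missing b)
    (Finset.union_subset (missing_subset a) (missing_subset b))
    ((Finset.card_union_le _ _).trans <| two_mul r ▸
      Nat.add_le_add (card_missing_le a) (card_missing_le b))
  refine ⟨M.med a b c, ?_, fun h hh => (h𝓡 h hh).1.2.2.1.med_mem ?_⟩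
  · rw [Function.iterate_succ_apply']
    exact ⟨a, ha, b, hb, c, hc, rfl⟩
  · have hbh : a ∉ h → b ∈ h := fun hah => hba h (Finset.mem_filter.2 ⟨hh, hah⟩)
    have hch : a ∉ h ∨ b ∉ h → c ∈ h := fun hab => hcab h <| Finset.mem_union.2 <|
      hab.imp (fun hah => Finset.mem_filter.2 ⟨hh, hah⟩) (fun hbh => Finset.mem_filter.2 ⟨hh, hbh⟩)
    tauto

theorem mem_iterate_mSet_of_finite (hr : RankLE M.med r) (hF : F.Finite)
    (hx : x ∈ medSpan M.med F) : x ∈ (MSet M.med)^[2 * r + 1] F := by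
  obtain ⟨𝓡, h𝓡, hfin, hanti, hmin⟩ :=
    exists_finite_isAntichain_inter_subset hF {h | IsHalfspace M.med h ∧ x ∈ h}
  lift 𝓡 to Finset (Set X) using hfin
  obtain ⟨y, hy, hy𝓡⟩ := hr.exists_mem_iterate_mSet_forall_mem hx 𝓡 (fun _ hh => h𝓡 hh) hanti
  suffices x = y from this ▸ hy
  by_contra hxy
  obtain ⟨g, hg, hxg, hyg⟩ := (IsConvexSet.singleton M x).exists_isHalfspace
    (Set.singleton_nonempty x) (Ne.symm hxy)
  obtain ⟨h, hh, hhg⟩ := hmin g ⟨hg, hxg rfl⟩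
  exact hyg <| IsConvexSet.mem_of_inter_subset_of_mem_medSpan (h𝓡 hh).1.2.2.2 hg.2.2.1 hhg
    (iterate_mSet_subset_medSpan _ hy) (hy𝓡 h hh)

theorem medSpan_eq_iterate_mSet (hr : RankLE M.med r) (A : Set X) :
    medSpan M.med A = (MSet M.med)^[2 * r + 1] A := by
  refine Set.Subset.antisymm (fun x hx => ?_) (iterate_mSet_subset_medSpan _)
  obtain ⟨F, hFA, hF, hxF⟩ := exists_finite_subset_mem_medSpan hx
  exact monotone_mSet.iterate _ hFA (hr.mem_iterate_mSet_of_finite hF hxF)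

end RankLE

/-! ### Median spaces -/

/-- `MetricBetween a z b` says that `z` lies in the metric interval from `a` to `b`. -/
def MetricBetween {X : Type*} [PseudoMetricSpace X] (a z b : X) : Prop :=
  dist a b = dist a z + dist z b

namespace MetricBetween

section PseudoMetricSpace

variable {X : Type*} [PseudoMetricSpace X] {a b t z : X}

theorem symm (h : MetricBetween a z b) : MetricBetween b z a := by
  rw [MetricBetween, dist_comm b a, dist_comm b z, dist_comm z a, add_comm]
  exact h

theorem trans_left (hz : MetricBetween a z b) (ht : MetricBetween a t z) :
    MetricBetween a t b := by
  rw [MetricBetween] at *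
  linarith [dist_triangle a t b, dist_triangle t z b]

theorem trans_left_right (hz : MetricBetween a z b) (ht : MetricBetween a t z) :
    MetricBetween t z b := by
  rw [MetricBetween] at *
  linarith [dist_triangle a t b, dist_triangle t z b]

end PseudoMetricSpace

theorem antisymm {X : Type*} [MetricSpace X] {a b z : X} (hz : MetricBetween a z b)
    (ha : MetricBetween a b z) : z = b := by
  rw [MetricBetween] at hz ha
  rw [dist_comm b z] at ha
  exact dist_eq_zero.1 (by linarith)

end MetricBetween

namespace MedianSpaceStruct

variable {X : Type*} [MetricSpace X] (M : MedianSpaceStruct X)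

theorem metricBetween_m₁₂ (a b c : X) : MetricBetween a (M.m a b c) b :=
  (M.isMedian a b c).1

theorem metricBetween_m₁₃ (a b c : X) : MetricBetween a (M.m a b c) c :=
  (M.isMedian a b c).2.1

theorem metricBetween_m₂₃ (a b c : X) : MetricBetween b (M.m a b c) c :=
  (M.isMedian a b c).2.2

theorem m_rot (a b c : X) : M.m a b c = M.m b c a :=
  M.unique b c a _ ⟨M.metricBetween_m₂₃ a b c, (M.metricBetween_m₁₂ a b c).symm,
    (M.metricBetween_m₁₃ a b c).symm⟩

theorem m_swap (a b c : X) : M.m a b c = M.m b a c :=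
  M.unique b a c _ ⟨(M.metricBetween_m₁₂ a b c).symm, M.metricBetween_m₂₃ a b c,
    M.metricBetween_m₁₃ a b c⟩

theorem m_eq_iff_metricBetween {a z b : X} : M.m a z b = z ↔ MetricBetween a z b := by
  refine ⟨fun h => ?_, fun h => (M.unique a z b z ⟨?_, h, ?_⟩).symm⟩
  · simpa only [h] using M.metricBetween_m₁₃ a z b
  · rw [dist_self, add_zero]
  · rw [dist_self, zero_add]

theorem metricBetween_m_right {x w a b : X} (ha : MetricBetween x w a)
    (hb : MetricBetween x w b) : MetricBetween x w (M.m a x b) := by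
  have haq : MetricBetween a (M.m a w b) w := M.metricBetween_m₁₂ a w b
  have hbq : MetricBetween b (M.m a w b) w := (M.metricBetween_m₂₃ a w b).symm
  have hq : M.m a w b = M.m a x b := M.unique a x b _
    ⟨ha.symm.trans_left haq, M.metricBetween_m₁₃ a w b, (hb.symm.trans_left hbq).symm⟩
  rw [← hq]
  exact (ha.symm.trans_left_right haq).symm

theorem metricBetween_m_assoc (a x b c : X) :
    MetricBetween x (M.m (M.m a x b) x c) (M.m a x (M.m b x c)) := by
  have hl : MetricBetween x (M.m (M.m a x b) x c) (M.m a x b) :=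
    (M.metricBetween_m₁₂ (M.m a x b) x c).symm
  have ha : MetricBetween x (M.m (M.m a x b) x c) a :=
    (M.metricBetween_m₁₂ a x b).symm.trans_left hl
  have hb : MetricBetween x (M.m (M.m a x b) x c) b :=
    (M.metricBetween_m₂₃ a x b).trans_left hl
  have hc : MetricBetween x (M.m (M.m a x b) x c) c := M.metricBetween_m₂₃ (M.m a x b) x c
  exact M.metricBetween_m_right ha (M.metricBetween_m_right hb hc)

theorem m_assoc (a x b c : X) : M.m (M.m a x b) x c = M.m a x (M.m b x c) := by
  have m_symm (u v w : X) : M.m u v w = M.m w v u := by rw [M.m_rot, M.m_swap, ← M.m_rot]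
  refine (M.metricBetween_m_assoc a x b c).antisymm ?_
  rw [m_symm (M.m a x b), m_symm a x b, m_symm a, m_symm b]
  exact M.metricBetween_m_assoc c x b a

/-- The median algebra underlying a median space. -/
def toMedianAlgebra : MedianAlgebra X where
  med := M.m
  absorb a b := by rw [m_eq_iff_metricBetween, MetricBetween, dist_self, zero_add]
  rot := M.m_rot
  swap := M.m_swap
  assoc := M.m_assoc

theorem metricBetween_m_of_metricBetween {a b t : X} (ht : MetricBetween a t b) (z : X) :
    MetricBetween z (M.m z a b) t :=
  M.m_eq_iff_metricBetween.1 <|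
    MedianAlgebra.Between.med_of_between (M := M.toMedianAlgebra)
      (M.m_eq_iff_metricBetween.2 ht) z

theorem dist_m_le_left (a a' b c : X) : dist (M.m a b c) (M.m a' b c) ≤ dist a a' := by
  have ha := M.metricBetween_m_of_metricBetween (M.metricBetween_m₂₃ a' b c) a
  have ha' := M.metricBetween_m_of_metricBetween (M.metricBetween_m₂₃ a b c) a'
  rw [MetricBetween] at ha ha'
  rw [dist_comm (M.m a' b c)] at ha'
  linarith [dist_triangle a a' (M.m a' b c), dist_triangle a' a (M.m a b c), dist_comm a a']

theorem dist_m_le (a b c a' b' c' : X) :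
    dist (M.m a b c) (M.m a' b' c') ≤ dist a a' + dist b b' + dist c c' := by
  have ha : dist (M.m a b c) (M.m a' b c) ≤ dist a a' := M.dist_m_le_left a a' b c
  have hb : dist (M.m a' b c) (M.m a' b' c) ≤ dist b b' := by
    rw [M.m_swap a' b, M.m_swap a' b']
    exact M.dist_m_le_left b b' a' c
  have hc : dist (M.m a' b' c) (M.m a' b' c') ≤ dist c c' := by
    rw [← M.m_rot c, ← M.m_rot c']
    exact M.dist_m_le_left c c' a' b'
  linarith [dist_triangle4 (M.m a b c) (M.m a' b c) (M.m a' b' c) (M.m a' b' c')]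

section ApproximateSubalgebra

variable {A : Set X} {R : ℝ}

theorem exists_dist_le_of_mem_mSet
    (hA : ∀ a ∈ A, ∀ b ∈ A, ∀ c ∈ A, ∃ p ∈ A, dist (M.m a b c) p ≤ R) {B : Set X} {D : ℝ}
    (hB : ∀ b ∈ B, ∃ p ∈ A, dist b p ≤ D) {x : X} (hx : x ∈ MSet M.m B) :
    ∃ p ∈ A, dist x p ≤ 3 * D + R := by
  obtain ⟨a, ha, b, hb, c, hc, rfl⟩ := hx
  obtain ⟨a', ha', haa'⟩ := hB a ha
  obtain ⟨b', hb', hbb'⟩ := hB b hb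
  obtain ⟨c', hc', hcc'⟩ := hB c hc
  obtain ⟨p, hp, hdist⟩ := hA a' ha' b' hb' c' hc'
  refine ⟨p, hp, ?_⟩
  linarith [M.dist_m_le a b c a' b' c', dist_triangle (M.m a b c) (M.m a' b' c') p]

theorem exists_dist_le_of_mem_iterate_mSet
    (hA : ∀ a ∈ A, ∀ b ∈ A, ∀ c ∈ A, ∃ p ∈ A, dist (M.m a b c) p ≤ R) (n : ℕ) :
    ∃ D : ℝ, ∀ x ∈ (MSet M.m)^[n] A, ∃ p ∈ A, dist x p ≤ D := by
  induction n with
  | zero => exact ⟨0, fun x hx => ⟨x, hx, (dist_self x).le⟩⟩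
  | succ n ih =>
    obtain ⟨D, hD⟩ := ih
    refine ⟨3 * D + R, fun x hx => M.exists_dist_le_of_mem_mSet hA hD ?_⟩
    rwa [Function.iterate_succ_apply'] at hx

end ApproximateSubalgebra

end MedianSpaceStruct

/-- if `X` is a median space of rank at most `r` and `A ⊆ X`
is an approximate median subalgebra (`m(A×A×A) ⊆ N_R(A)` for some `R ≥ 0`),
then the Hausdorff distance between `A` and the median subalgebra generated by
`A` is finite. -/
theorem stmt10 {X : Type*} [MetricSpace X] (M : MedianSpaceStruct X) (r : ℕ)
    (hr : RankLE M.m r) (A : Set X) (R : ℝ) (hR : 0 ≤ R)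
    (happrox : ∀ a ∈ A, ∀ b ∈ A, ∀ c ∈ A, ∃ p ∈ A, dist (M.m a b c) p ≤ R) :
    EMetric.hausdorffEdist A (medSpan M.m A) ≠ ⊤ := by
  have hspan : medSpan M.m A = (MSet M.m)^[2 * r + 1] A :=
    RankLE.medSpan_eq_iterate_mSet (M := M.toMedianAlgebra) hr A
  obtain ⟨D, hD⟩ := M.exists_dist_le_of_mem_iterate_mSet happrox (2 * r + 1)
  refine ne_top_of_le_ne_top (ENNReal.ofReal_ne_top (r := D))
    (Metric.hausdorffEDist_le_of_mem_edist (fun a ha => ?_) fun x hx => ?_)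
  · exact ⟨a, subset_medSpan ha, by simp only [edist_self, zero_le]⟩
  · obtain ⟨p, hp, hxp⟩ := hD x (hspan ▸ hx)
    exact ⟨p, hp, edist_dist x p ▸ ENNReal.ofReal_le_ofReal hxp⟩
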